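/- arXiv:1606.09594 — 5 statements merged into one kernel-verified Lean document; each statement's English description precedes it below -/
import Mathlib

section
/- Let (V, c) be a context and let θ be a permutation of Fin n that is a contextual symmetry of the weighted-feature model under (V, c). Then for every state s consistent with the context, the state θ·s is also consistent with the context and P(θ·s) = P(s). -/
/-!
On states consistent with the context, overriding does nothing, so the reduced features agree with
the original ones. Since `θ` fixes `V` pointwise, it preserves consistency; hence the symmetry
condition reads `φ (σ k) (θ · s) = φ k s`, and reindexing the weighted sum along `σ` shows that
`θ · s` and `s` have the same unnormalized weight. The normalizing constant does not depend on the
state.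
-/

/-- A permutation of variables acts on states by `(θ · s) i = s (θ⁻¹ i)`. -/
def act {n : ℕ} (θ : Equiv.Perm (Fin n)) (s : Fin n → Bool) : Fin n → Bool :=
  fun i => s (θ⁻¹ i)

/-- Override a state with the context values `c` on the context variables `V`. -/
def override {n : ℕ} (V : Finset (Fin n)) (c : Fin n → Bool) (s : Fin n → Bool) :
    Fin n → Bool :=
  fun i => if i ∈ V then c i else s i

/-- `θ` is a contextual symmetry of the weighted-feature model `(φ, w)` under
context `(V, c)`: it fixes all context variables, and there is a weight-preserving
permutation `σ` of features matching the reduced features `ψ k = φ k ∘ override V c`. -/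
def IsContextualSym {n m : ℕ} (φ : Fin m → ((Fin n → Bool) → Bool)) (w : Fin m → ℝ)
    (V : Finset (Fin n)) (c : Fin n → Bool) (θ : Equiv.Perm (Fin n)) : Prop :=
  (∀ i ∈ V, θ i = i) ∧
  ∃ σ : Equiv.Perm (Fin m), (∀ k, w (σ k) = w k) ∧
    ∀ k s, (φ (σ k) ∘ override V c) (act θ s) = (φ k ∘ override V c) s

/-- Unnormalized weight of a state in a weighted-feature model. -/
noncomputable def Wt {n m : ℕ} (φ : Fin m → ((Fin n → Bool) → Bool)) (w : Fin m → ℝ)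
    (s : Fin n → Bool) : ℝ :=
  Real.exp (∑ k, w k * (if φ k s then 1 else 0))

/-- Distribution of a weighted-feature model. -/
noncomputable def Pr {n m : ℕ} (φ : Fin m → ((Fin n → Bool) → Bool)) (w : Fin m → ℝ)
    (s : Fin n → Bool) : ℝ :=
  Wt φ w s / (∑ t, Wt φ w t)

theorem override_eq_self {n : ℕ} {V : Finset (Fin n)} {c s : Fin n → Bool}
    (hs : ∀ i ∈ V, s i = c i) : override V c s = s := by
  funext i
  by_cases hi : i ∈ V
  · simp [override, hi, hs i hi]
  · simp [override, hi]

theorem contextual_symmetry_probability_preserving {n m : ℕ}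
    (φ : Fin m → ((Fin n → Bool) → Bool)) (w : Fin m → ℝ)
    (V : Finset (Fin n)) (c : Fin n → Bool)
    (θ : Equiv.Perm (Fin n))
    (hθ : IsContextualSym φ w V c θ) :
    ∀ s : Fin n → Bool, (∀ i ∈ V, s i = c i) →
      (∀ i ∈ V, act θ s i = c i) ∧ Pr φ w (act θ s) = Pr φ w s := by
  intro s hs
  obtain ⟨hfix, σ, hw, hσ⟩ := hθ
  have hc : ∀ i ∈ V, act θ s i = c i := by
    intro i hi
    have hinv : θ⁻¹ i = i := Equiv.Perm.inv_eq_iff_eq.mpr (hfix i hi).symm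
    rw [act, hinv, hs i hi]
  have hφ : ∀ k, φ (σ k) (act θ s) = φ k s := by
    intro k
    simpa only [Function.comp_apply, override_eq_self hc, override_eq_self hs] using hσ k s
  have hW : Wt φ w (act θ s) = Wt φ w s := by
    unfold Wt
    rw [← Equiv.sum_comp σ]
    simp only [hw, hφ]
  exact ⟨hc, by rw [Pr, Pr, hW]⟩
end

section
/- Let θ be an orbital symmetry of the weighted-feature model, i.e., there exists a permutation σ of Fin m with w (σ k) = w k and φ (σ k) (θ·s) = φ k s for all k and all states s. Let (V, c) be a context such that θ i = i for all i ∈ V. Then θ is a contextual symmetry of the model under the context (V, c). -/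
/-- Overriding by the context commutes with a permutation fixing `V` pointwise: such a
permutation also maps the complement of `V` to itself, so `i` and `θ⁻¹ i` always fall in the same
branch of the override. -/
theorem override_act {n : ℕ} (θ : Equiv.Perm (Fin n)) (V : Finset (Fin n))
    (c s : Fin n → Bool) (hfix : ∀ i ∈ V, θ i = i) :
    override V c (act θ s) = act θ (override V c s) := by
  funext i
  by_cases hi : i ∈ V
  · have h : θ⁻¹ i = i := Equiv.Perm.inv_eq_iff_eq.mpr (hfix i hi).symm
    simp [override, act, hi, h]
  · have h : θ⁻¹ i ∉ V := fun hV => by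
      have hθ := hfix _ hV
      rw [show θ (θ⁻¹ i) = i from θ.apply_symm_apply i] at hθ
      exact hi (hθ ▸ hV)
    simp only [override, act, if_neg hi, if_neg h]

theorem orbital_symmetry_is_contextual_symmetry {n m : ℕ}
    (φ : Fin m → ((Fin n → Bool) → Bool)) (w : Fin m → ℝ)
    (θ : Equiv.Perm (Fin n))
    (horb : ∃ σ : Equiv.Perm (Fin m),
      (∀ k, w (σ k) = w k) ∧ ∀ k s, φ (σ k) (act θ s) = φ k s)
    (V : Finset (Fin n)) (c : Fin n → Bool)
    (hfix : ∀ i ∈ V, θ i = i) :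
    IsContextualSym φ w V c θ := by
  obtain ⟨σ, hw, hφ⟩ := horb
  refine ⟨hfix, σ, hw, fun k s => ?_⟩
  -- The same feature permutation `σ` works: evaluate its invariance at the overridden state.
  rw [Function.comp_apply, Function.comp_apply, override_act θ V c s hfix, hφ]
end

section
/- Let V : Finset (Fin n), and let θ be a permutation of Fin n with θ i = i for all i ∈ V. Suppose that for every assignment c : Fin n → Bool, the permutation θ is a contextual symmetry of the weighted-feature model under the context (V, c). Then θ preserves the distribution globally: P(θ·s) = P(s) for every state s. -/
theorem contextual_symmetry_under_all_contexts_is_global {n m : ℕ}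
    (φ : Fin m → ((Fin n → Bool) → Bool)) (w : Fin m → ℝ)
    (V : Finset (Fin n))
    (θ : Equiv.Perm (Fin n))
    (hfix : ∀ i ∈ V, θ i = i)
    (hall : ∀ c : Fin n → Bool, IsContextualSym φ w V c θ) :
    ∀ s, Pr φ w (act θ s) = Pr φ w s := by
  intro s
  have hs : override V s s = s := by
    funext i
    simp [override]
  have hact : override V s (act θ s) = act θ s := by
    funext i
    by_cases hi : i ∈ V
    · have h : θ⁻¹ i = i := Equiv.Perm.inv_eq_iff_eq.mpr (hfix i hi).symm
      simp [override, act, hi, h]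
    · simp [override, hi]
  -- The context values are those of `s` itself, so overriding changes neither `s` nor `act θ s`.
  obtain ⟨-, σ, hw, hφ⟩ := hall s
  have hφs : ∀ k, φ (σ k) (act θ s) = φ k s := by
    intro k
    have h := hφ k s
    rwa [Function.comp_apply, Function.comp_apply, hact, hs] at h
  have hW : Wt φ w (act θ s) = Wt φ w s := by
    unfold Wt
    rw [← Equiv.sum_comp σ]
    simp only [hw, hφs]
  rw [Pr, Pr, hW]
end

section
/- Let θ be a contextual symmetry of the weighted-feature model under a context (V, c), and let E = {s : state ∣ s is consistent with (V, c)} with ∑_{t ∈ E} W(t) > 0. Then the map s ↦ θ·s is a bijection of E onto itself, and the conditional distribution given the context is invariant: for every s ∈ E, W(θ·s) / (∑_{t ∈ E} W(t)) = W(s) / (∑_{t ∈ E} W(t)). -/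
theorem act_inv_act {n : ℕ} (θ : Equiv.Perm (Fin n)) (s : Fin n → Bool) :
    act θ⁻¹ (act θ s) = s := by
  funext i
  simp [act]

theorem act_act_inv {n : ℕ} (θ : Equiv.Perm (Fin n)) (s : Fin n → Bool) :
    act θ (act θ⁻¹ s) = s := by
  funext i
  simp [act]

theorem act_consistent {n : ℕ} {V : Finset (Fin n)} {c : Fin n → Bool} {θ : Equiv.Perm (Fin n)}
    (hfix : ∀ i ∈ V, θ i = i) {s : Fin n → Bool} (hs : ∀ i ∈ V, s i = c i) :
    ∀ i ∈ V, act θ s i = c i := by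
  intro i hi
  have h : θ⁻¹ i = i := Equiv.Perm.inv_eq_iff_eq.mpr (hfix i hi).symm
  simp only [act, h, hs i hi]

/-- Already the unnormalized weight is invariant on states consistent with the context. -/
theorem IsContextualSym.wt_act {n m : ℕ} {φ : Fin m → ((Fin n → Bool) → Bool)} {w : Fin m → ℝ}
    {V : Finset (Fin n)} {c : Fin n → Bool} {θ : Equiv.Perm (Fin n)}
    (hθ : IsContextualSym φ w V c θ) {s : Fin n → Bool} (hs : ∀ i ∈ V, s i = c i) :
    Wt φ w (act θ s) = Wt φ w s := by
  obtain ⟨hfix, σ, hw, hφ⟩ := hθ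
  have key : ∀ k, φ (σ k) (act θ s) = φ k s := by
    intro k
    have h := hφ k s
    simp only [Function.comp_apply] at h
    rwa [override_eq_self hs, override_eq_self (act_consistent hfix hs)] at h
  unfold Wt
  rw [← Equiv.sum_comp σ]
  simp only [key, hw]

theorem contextual_symmetry_conditional_invariance {n m : ℕ}
    (φ : Fin m → ((Fin n → Bool) → Bool)) (w : Fin m → ℝ)
    (V : Finset (Fin n)) (c : Fin n → Bool)
    (θ : Equiv.Perm (Fin n))
    (hθ : IsContextualSym φ w V c θ)
    (E : Finset (Fin n → Bool))
    (hE : ∀ s : Fin n → Bool, s ∈ E ↔ ∀ i ∈ V, s i = c i)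
    (hpos : 0 < ∑ t ∈ E, Wt φ w t) :
    Set.BijOn (act θ) (↑E : Set (Fin n → Bool)) (↑E : Set (Fin n → Bool)) ∧
      ∀ s ∈ E, Wt φ w (act θ s) / (∑ t ∈ E, Wt φ w t)
        = Wt φ w s / (∑ t ∈ E, Wt φ w t) := by
  have hfix := hθ.1
  have hfix_inv : ∀ i ∈ V, θ⁻¹ i = i := fun i hi =>
    Equiv.Perm.inv_eq_iff_eq.mpr (hfix i hi).symm
  refine ⟨⟨?_, ?_, ?_⟩, ?_⟩
  · intro s hs
    exact (hE _).2 (act_consistent hfix ((hE s).1 hs))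
  · exact (Function.LeftInverse.injective (act_inv_act θ)).injOn
  · intro s hs
    exact ⟨act θ⁻¹ s, (hE _).2 (act_consistent hfix_inv ((hE s).1 hs)), act_act_inv θ s⟩
  · intro s hs
    rw [hθ.wt_act ((hE s).1 hs)]
end

section
/- Let a weighted clause model be given by clauses L : Fin m → Finset (Fin n × Bool) and weights w : Fin m → ℝ. Define its colored graph on the vertex type (Fin n × Bool) ⊕ Fin m, where inl (i, b) and inl (i', b') are adjacent iff i = i' and b ≠ b', inl (i, b) and inr k are adjacent iff (i, b) ∈ L k, and no two inr vertices are adjacent. Let θ : Equiv.Perm (Fin n) and σ : Equiv.Perm (Fin m) with w (σ k) = w k for all k, and let g be the vertex bijection sending inl (i, b) to inl (θ i, b) and inr k to inr (σ k). Then g is an automorphism of the colored graph if and only if for every k, L (σ k) is the image of L k under the map (i, b) ↦ (θ i, b); that is, the color-preserving automorphisms of this form correspond exactly to the weight-preserving symmetries (θ, σ) of the weighted clause model. -/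
/-! Both conditions say the same thing about literal–clause incidences:
`(i, b) ∈ L k ↔ (θ i, b) ∈ L (σ k)`. For the graph this is preservation of the edges between
literals and clauses; the remaining adjacencies are preserved by every such map, since `θ` is
injective and polarities are kept, and clause vertices are pairwise nonadjacent. For the clauses
it is the set equality, read elementwise, because every variable has the form `θ i`. -/

/-- Adjacency of the colored graph of a weighted clause model: literal vertices
`inl (i, b)` and `inl (i', b')` are adjacent iff they are literals of the same
variable with opposite polarities; a literal vertex `inl (i, b)` and a clause
vertex `inr k` are adjacent iff the literal occurs in the clause; clause
vertices are never adjacent to each other. -/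
def clauseAdj {n m : ℕ} (L : Fin m → Finset (Fin n × Bool)) :
    ((Fin n × Bool) ⊕ Fin m) → ((Fin n × Bool) ⊕ Fin m) → Prop
  | Sum.inl (i, b), Sum.inl (i', b') => i = i' ∧ b ≠ b'
  | Sum.inl (i, b), Sum.inr k => (i, b) ∈ L k
  | Sum.inr k, Sum.inl (i, b) => (i, b) ∈ L k
  | Sum.inr _, Sum.inr _ => False

theorem colored_graph_automorphism_iff_clause_symmetry {n m : ℕ}
    (L : Fin m → Finset (Fin n × Bool)) (w : Fin m → ℝ)
    (θ : Equiv.Perm (Fin n)) (σ : Equiv.Perm (Fin m))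
    (hw : ∀ k, w (σ k) = w k) :
    (∀ u v : (Fin n × Bool) ⊕ Fin m,
        clauseAdj L u v ↔
          clauseAdj L (Sum.map (fun p : Fin n × Bool => (θ p.1, p.2)) σ u)
            (Sum.map (fun p : Fin n × Bool => (θ p.1, p.2)) σ v)) ↔
      ∀ k, L (σ k) = (L k).image (fun p : Fin n × Bool => (θ p.1, p.2)) := by
  -- Membership in the image, pulled back along the bijection `θ`.
  have mem_image_iff : ∀ (k : Fin m) (i : Fin n) (b : Bool),
      (θ i, b) ∈ (L k).image (fun p : Fin n × Bool => (θ p.1, p.2)) ↔ (i, b) ∈ L k := by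
    intro k i b
    simp
  constructor
  · intro h k
    ext ⟨j, b⟩
    obtain ⟨i, rfl⟩ := θ.surjective j
    rw [mem_image_iff]
    exact (h (Sum.inl (i, b)) (Sum.inr k)).symm
  · intro h u v
    have mem_iff : ∀ (k : Fin m) (i : Fin n) (b : Bool),
        (i, b) ∈ L k ↔ (θ i, b) ∈ L (σ k) := by
      intro k i b
      rw [h k, mem_image_iff]
    rcases u with ⟨i, b⟩ | k <;> rcases v with ⟨i', b'⟩ | k'
    · simp [clauseAdj]
    · exact mem_iff k' i b
    · exact mem_iff k i' b'
    · exact Iff.rfl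
end
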